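/- Let G = (V, E) be a finite simple graph with n ≥ 2 vertices and m ≥ 1 edges, and let 0 < ε ≤ 1. Let k be a positive integer with k ≥ 384 · ln n / ε². Draw ((v₁, π₁), …, (v_k, π_k)) uniformly at random from (V × Π)^k, let X = #{ i ∈ [k] : v_i is matched in GMM(G, π_i) }, and let f = X/k. Then with probability at least 1 − 2n⁻⁴, both μ(G)/2 − ε·n ≤ f·n/2 − ε·n/2 ≤ μ(G) and ν(G) ≤ f·n + ε·n/4 ≤ 2·ν(G) + ε·n. -/

import Mathlib

/-!
For every ranking `π`, the greedy matching `M` is a matching, and every edge of `G` shares an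
endpoint with an edge of `M` (`exists_matched_of_edge`). Hence the set `S` of matched vertices is a
vertex cover with `|S| = 2|M|`. Every matching is at most as large as every vertex cover, so both
`μ(G)` and `ν(G)` are at most `|S|`, while `|S|` is at most `2 μ(G)` and at most `2 ν(G)`
(`matchedSet_bounds`). Averaging over `π`, the probability `p` that a random vertex is
matched satisfies `μ, ν ≤ p n ≤ 2 μ, 2 ν`.

All four inequalities follow once `|f - p| ≤ ε / 4`. The lemma `card_tail_le` bounds each tail by
`exp (-k (ε / 4) ^ 2 / 4) ≤ n ^ (-4)`: this is the exponential moment method carried out by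
counting, with `exp x ≤ 1 + x + x ^ 2` for `|x| ≤ 1` in place of the sharp form of Hoeffding's lemma.
-/

namespace RGMM

noncomputable section

variable {V : Type} [Fintype V] [DecidableEq V]

/-- Two edges (as unordered pairs) share an endpoint. -/
def Share (e f : Sym2 V) : Prop := ∃ x, x ∈ e ∧ x ∈ f

/-- `inGMM G π e` holds iff the edge `e` belongs to the greedy maximal matching
`GMM(G, π)` of `G` obtained by processing the edges in increasing order of the rank
function `π` and adding each edge whose endpoints are both unmatched so far. -/
def inGMM (G : SimpleGraph V) (π : Sym2 V → ℕ) (e : Sym2 V) : Prop :=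
  e ∈ G.edgeSet ∧ ∀ f, f ∈ G.edgeSet → Share e f → π f < π e → ¬ inGMM G π f
termination_by π e
decreasing_by assumption

/-- The set `Π` of permutations of the edges of `G`: bijections from the edge set to
`{0, …, m-1}`, equivalently `{1, …, m}` after the shift performed in `rank`. -/
abbrev EdgePerm (G : SimpleGraph V) [DecidableRel G.Adj] : Type :=
  {e // e ∈ G.edgeFinset} ≃ Fin G.edgeFinset.card

/-- The rank (in `{1, …, m}`) of an edge under a permutation; non-edges get rank `0`. -/
def rank (G : SimpleGraph V) [DecidableRel G.Adj] (σ : EdgePerm G) (e : Sym2 V) : ℕ :=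
  if h : e ∈ G.edgeFinset then (σ ⟨e, h⟩ : ℕ) + 1 else 0

/-- `M` is a matching of `G` (a set of pairwise non-adjacent edges of `G`). -/
def IsMatchingFinset (G : SimpleGraph V) (M : Finset (Sym2 V)) : Prop :=
  (∀ e ∈ M, e ∈ G.edgeSet) ∧ ∀ e ∈ M, ∀ f ∈ M, e ≠ f → ¬ Share e f

/-- `μ(G)`: the maximum size of a matching of `G`. -/
def matchNum (G : SimpleGraph V) : ℕ :=
  sSup {k | ∃ M : Finset (Sym2 V), IsMatchingFinset G M ∧ M.card = k}

/-- `C` is a vertex cover of `G`. -/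
def IsVertexCover (G : SimpleGraph V) (C : Finset V) : Prop :=
  ∀ e ∈ G.edgeSet, ∃ x ∈ C, x ∈ e

/-- `ν(G)`: the minimum size of a vertex cover of `G`. -/
def vcNum (G : SimpleGraph V) : ℕ :=
  sInf {k | ∃ C : Finset V, IsVertexCover G C ∧ C.card = k}

/-- `v` is matched in `GMM(G, π)`. -/
def matchedIn (G : SimpleGraph V) (π : Sym2 V → ℕ) (v : V) : Prop :=
  ∃ e, inGMM G π e ∧ v ∈ e

/-! ### The greedy matching -/

lemma inGMM_iff {V : Type} (G : SimpleGraph V) (π : Sym2 V → ℕ) (e : Sym2 V) :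
    inGMM G π e ↔ e ∈ G.edgeSet ∧
      ∀ f, f ∈ G.edgeSet → Share e f → π f < π e → ¬ inGMM G π f := by
  rw [inGMM]

lemma Share.symm {V : Type} {e f : Sym2 V} (h : Share e f) : Share f e := by
  obtain ⟨x, hx, hy⟩ := h
  exact ⟨x, hy, hx⟩

open Classical in
/-- The greedy maximal matching as a finset of edges. -/
def gmm {V : Type} [Fintype V] (G : SimpleGraph V) (π : Sym2 V → ℕ) : Finset (Sym2 V) :=
  Finset.univ.filter (fun e => inGMM G π e)

open Classical in
/-- The set of vertices matched by the greedy maximal matching. -/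
def matchedSet {V : Type} [Fintype V] (G : SimpleGraph V) (π : Sym2 V → ℕ) : Finset V :=
  Finset.univ.filter (fun v => matchedIn G π v)

lemma gmm_isMatching {V : Type} [Fintype V] (G : SimpleGraph V) (π : Sym2 V → ℕ) (hπ : Set.InjOn π G.edgeSet) :
    IsMatchingFinset G (gmm G π) := by
  have key : ∀ e f, inGMM G π e → inGMM G π f → Share e f → ¬ π f < π e := by
    intro e f he hf hs hlt
    exact ((inGMM_iff G π e).1 he).2 f ((inGMM_iff G π f).1 hf).1 hs hlt hf
  refine ⟨fun e he => ?_, fun e he f hf hne hs => ?_⟩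
  · simp only [gmm, Finset.mem_filter, Finset.mem_univ, true_and] at he
    exact ((inGMM_iff G π e).1 he).1
  · simp only [gmm, Finset.mem_filter, Finset.mem_univ, true_and] at he hf
    have h1 := key e f he hf hs
    have h2 := key f e hf he hs.symm
    exact hne (hπ ((inGMM_iff G π e).1 he).1 ((inGMM_iff G π f).1 hf).1 (by omega))

/-- Maximality of the greedy matching: every edge has a matched endpoint. -/
lemma exists_matched_of_edge {V : Type} (G : SimpleGraph V) (π : Sym2 V → ℕ) (e : Sym2 V)
    (he : e ∈ G.edgeSet) : ∃ x, matchedIn G π x ∧ x ∈ e := by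
  by_cases h : inGMM G π e
  · induction e with
    | _ a b => exact ⟨a, ⟨s(a, b), h, by simp⟩, by simp⟩
  · rw [inGMM_iff] at h
    push Not at h
    obtain ⟨f, hf, ⟨x, hxe, hxf⟩, hlt, hg⟩ := h he
    exact ⟨x, ⟨f, hg, hxf⟩, hxe⟩

lemma matchedSet_isVertexCover {V : Type} [Fintype V] (G : SimpleGraph V) (π : Sym2 V → ℕ) :
    IsVertexCover G (matchedSet G π) := by
  intro e he
  obtain ⟨x, hx, hxe⟩ := exists_matched_of_edge G π e he
  exact ⟨x, by simpa [matchedSet] using hx, hxe⟩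

lemma card_matchedSet (G : SimpleGraph V) (π : Sym2 V → ℕ) (hπ : Set.InjOn π G.edgeSet) :
    (matchedSet G π).card = 2 * (gmm G π).card := by
  have hM := gmm_isMatching G π hπ
  have hS : matchedSet G π = (gmm G π).biUnion (fun e => e.toFinset) := by
    ext v
    simp only [matchedSet, gmm, Finset.mem_filter, Finset.mem_univ, true_and,
      Finset.mem_biUnion, Sym2.mem_toFinset]
    rfl
  rw [hS, Finset.card_biUnion]
  · rw [Finset.sum_congr rfl (g := fun _ => 2)]
    · simp [mul_comm]
    · intro e he
      exact Sym2.card_toFinset_of_not_isDiag e (G.not_isDiag_of_mem_edgeSet (hM.1 e he))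
  · intro e he f hf hne
    refine Finset.disjoint_left.2 ?_
    intro x hx hy
    exact hM.2 e he f hf hne ⟨x, by simpa using hx, by simpa using hy⟩

/-! ### Matchings and vertex covers -/

/-- Weak duality: the edges of a matching are covered by distinct vertices. -/
lemma card_matching_le_card_cover {V : Type} (G : SimpleGraph V) (M : Finset (Sym2 V)) (C : Finset V)
    (hM : IsMatchingFinset G M) (hC : IsVertexCover G C) : M.card ≤ C.card := by
  classical
  have h : ∀ e : Sym2 V, ∃ x : V, e ∈ M → x ∈ C ∧ x ∈ e := by
    intro e
    by_cases he : e ∈ M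
    · obtain ⟨x, hx⟩ := hC e (hM.1 e he)
      exact ⟨x, fun _ => hx⟩
    · induction e with
      | _ a b => exact ⟨a, fun h => absurd h he⟩
  choose c hc using h
  refine Finset.card_le_card_of_injOn c (fun e he => (hc e he).1) ?_
  intro e he f hf hef
  by_contra hne
  exact hM.2 e he f hf hne ⟨c e, (hc e he).2, hef ▸ (hc f hf).2⟩

lemma card_le_matchNum {V : Type} [Fintype V] (G : SimpleGraph V) (M : Finset (Sym2 V)) (hM : IsMatchingFinset G M) :
    M.card ≤ matchNum G := by
  refine le_csSup ⟨Fintype.card (Sym2 V), ?_⟩ ⟨M, hM, rfl⟩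
  rintro k ⟨M', -, rfl⟩
  exact Finset.card_le_univ M'

lemma matchNum_le_card {V : Type} (G : SimpleGraph V) (C : Finset V) (hC : IsVertexCover G C) :
    matchNum G ≤ C.card := by
  refine csSup_le ⟨0, ∅, by simp [IsMatchingFinset], by simp⟩ ?_
  rintro k ⟨M, hM, rfl⟩
  exact card_matching_le_card_cover G M C hM hC

lemma vcNum_le_card {V : Type} (G : SimpleGraph V) (C : Finset V) (hC : IsVertexCover G C) :
    vcNum G ≤ C.card :=
  Nat.sInf_le ⟨C, hC, rfl⟩

lemma card_le_vcNum {V : Type} [Fintype V] (G : SimpleGraph V) (M : Finset (Sym2 V)) (hM : IsMatchingFinset G M) :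
    M.card ≤ vcNum G := by
  refine le_csInf ⟨Finset.univ.card, Finset.univ, fun e he => ?_, rfl⟩ ?_
  · induction e with
    | _ a b => exact ⟨a, by simp, by simp⟩
  · rintro k ⟨C, hC, rfl⟩
    exact card_matching_le_card_cover G M C hM hC

lemma matchedSet_bounds (G : SimpleGraph V) (π : Sym2 V → ℕ) (hπ : Set.InjOn π G.edgeSet) :
    matchNum G ≤ (matchedSet G π).card ∧ (matchedSet G π).card ≤ 2 * matchNum G ∧
      vcNum G ≤ (matchedSet G π).card ∧ (matchedSet G π).card ≤ 2 * vcNum G := by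
  have hC := matchedSet_isVertexCover G π
  have hM := gmm_isMatching G π hπ
  have h := card_matchedSet G π hπ
  have h1 := card_le_matchNum G _ hM
  have h2 := card_le_vcNum G _ hM
  exact ⟨matchNum_le_card G _ hC, by omega, vcNum_le_card G _ hC, by omega⟩

lemma rank_injOn (G : SimpleGraph V) [DecidableRel G.Adj] (σ : EdgePerm G) :
    Set.InjOn (rank G σ) G.edgeSet := by
  intro e he f hf hef
  have he' : e ∈ G.edgeFinset := by simpa using he
  have hf' : f ∈ G.edgeFinset := by simpa using hf
  simp only [rank, he', hf', dif_pos] at hef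
  have := σ.injective (Fin.ext (Nat.succ_injective hef))
  simpa using this

/-! ### Concentration -/

/-- Chernoff bound, in counting form, for a centred function on a finite probability space with
values in `[-1, 1]`, sampled `k` times independently. -/
lemma card_tail_le {A : Type} [Fintype A] (g : A → ℝ) (hg : ∀ a, |g a| ≤ 1)
    (hsum : ∑ a, g a = 0) (δ : ℝ) (hδ0 : 0 < δ) (hδ1 : δ ≤ 1) (k : ℕ)
    (B : Finset (Fin k → A)) (hB : ∀ ω ∈ B, k * δ ≤ ∑ i, g (ω i)) :
    (B.card : ℝ) ≤ (Fintype.card A : ℝ) ^ k * Real.exp (-(k * δ ^ 2 / 4)) := by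
  classical
  -- `t = δ / 2` minimises `exp (k (t ^ 2 - t δ))`
  set t : ℝ := δ / 2 with ht
  have hpt : ∀ a, Real.exp (t * g a) ≤ 1 + t * g a + t ^ 2 := by
    intro a
    have ha := hg a
    have ht0 : |t| ≤ 1 := by rw [abs_of_pos (by linarith)]; linarith
    have h1 : |t * g a| ≤ 1 := by
      rw [abs_mul]; exact mul_le_one₀ ht0 (abs_nonneg _) ha
    have h2 := (abs_le.1 (Real.abs_exp_sub_one_sub_id_le h1)).2
    have h3 : (g a) ^ 2 ≤ 1 := by
      rw [← sq_abs]; exact pow_le_one₀ (abs_nonneg _) ha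
    have h4 : (t * g a) ^ 2 ≤ t ^ 2 := by
      rw [mul_pow]; nlinarith [sq_nonneg t]
    linarith
  have hmgf : ∑ a, Real.exp (t * g a) ≤ Fintype.card A * Real.exp (t ^ 2) := by
    calc ∑ a, Real.exp (t * g a) ≤ ∑ a, (1 + t * g a + t ^ 2) :=
          Finset.sum_le_sum fun a _ => hpt a
      _ = Fintype.card A * (t ^ 2 + 1) := by
          simp only [Finset.sum_add_distrib, ← Finset.mul_sum, hsum, Finset.sum_const,
            Finset.card_univ, nsmul_eq_mul]
          ring
      _ ≤ _ := by
          gcongr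
          exact Real.add_one_le_exp _
  have hprod : ∑ ω : Fin k → A, Real.exp (t * ∑ i, g (ω i)) =
      (∑ a, Real.exp (t * g a)) ^ k := by
    rw [← Fin.prod_const, Finset.prod_univ_sum, Fintype.piFinset_univ]
    refine Finset.sum_congr rfl fun ω _ => ?_
    rw [Finset.mul_sum, Real.exp_sum]
  have hmarkov : (B.card : ℝ) * Real.exp (t * (k * δ)) ≤
      ∑ ω : Fin k → A, Real.exp (t * ∑ i, g (ω i)) := by
    calc (B.card : ℝ) * Real.exp (t * (k * δ)) = ∑ ω ∈ B, Real.exp (t * (k * δ)) := by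
          simp
      _ ≤ ∑ ω ∈ B, Real.exp (t * ∑ i, g (ω i)) := by
          refine Finset.sum_le_sum fun ω hω => ?_
          have := hB ω hω
          have : 0 ≤ t := by positivity
          gcongr
      _ ≤ _ := Finset.sum_le_univ_sum_of_nonneg fun ω => (Real.exp_pos _).le
  have hall : (B.card : ℝ) * Real.exp (t * (k * δ)) ≤
      (Fintype.card A : ℝ) ^ k * Real.exp (k * t ^ 2) := by
    refine hmarkov.trans ?_
    rw [hprod, Real.exp_nat_mul, ← mul_pow]
    exact pow_le_pow_left₀ (Finset.sum_nonneg fun a _ => (Real.exp_pos _).le) hmgf k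
  have hexp : Real.exp (-(k * δ ^ 2 / 4)) * Real.exp (t * (k * δ)) = Real.exp (k * t ^ 2) := by
    rw [← Real.exp_add, ht]
    congr 1
    ring
  rw [← hexp, ← mul_assoc (_ ^ k)] at hall
  exact le_of_mul_le_mul_right hall (Real.exp_pos _)

/-- The four required inequalities, for `a = μ(G)` and `b = ν(G)`, once the empirical frequency `f`
is within `ε / 4` of the probability `p`. -/
lemma deterministic_bounds (a b f p ε n k : ℝ) (hε : 0 < ε) (hn : 0 < n) (hk : 0 < k)
    (h1 : k * f - k * p < k * (ε / 4)) (h2 : k * p - k * f < k * (ε / 4))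
    (ha1 : a ≤ p * n) (ha2 : p * n ≤ 2 * a) (hb1 : b ≤ p * n) (hb2 : p * n ≤ 2 * b) :
    (a / 2 - ε * n ≤ f * n / 2 - ε * n / 2 ∧ f * n / 2 - ε * n / 2 ≤ a) ∧
      (b ≤ f * n + ε * n / 4 ∧ f * n + ε * n / 4 ≤ 2 * b + ε * n) := by
  rw [← mul_sub] at h1 h2
  have h1' := mul_lt_mul_of_pos_right (lt_of_mul_lt_mul_left h1 hk.le) hn
  have h2' := mul_lt_mul_of_pos_right (lt_of_mul_lt_mul_left h2 hk.le) hn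
  have h3 : 0 < ε * n := by positivity
  refine ⟨⟨?_, ?_⟩, ?_, ?_⟩ <;> linarith

/-! ### Averaging over rankings and assembling the estimate -/

/-- **Statement 13.** Let `G` have `n ≥ 2` vertices and `m ≥ 1` edges, let `0 < ε ≤ 1` and
let `k ≥ 384·ln n/ε²`.  Sampling `((v₁, π₁), …, (v_k, π_k))` uniformly from `(V × Π)^k`,
with `X` the number of indices `i` with `v_i` matched in `GMM(G, π_i)` and `f = X/k`, with
probability at least `1 − 2n⁻⁴` both `μ(G)/2 − ε·n ≤ f·n/2 − ε·n/2 ≤ μ(G)` and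
`ν(G) ≤ f·n + ε·n/4 ≤ 2·ν(G) + ε·n`. -/
theorem statement_13 {V : Type} [Fintype V] [DecidableEq V] (G : SimpleGraph V)
    [DecidableRel G.Adj] (hn : 2 ≤ Fintype.card V) (hm : 1 ≤ G.edgeFinset.card)
    (ε : ℝ) (hε0 : 0 < ε) (hε1 : ε ≤ 1) (k : ℕ) (hk0 : 0 < k)
    (hk : 384 * Real.log (Fintype.card V) / ε ^ 2 ≤ (k : ℝ)) :
    (1 - 2 / (Fintype.card V : ℝ) ^ 4) *
        (Fintype.card (Fin k → V × EdgePerm G) : ℝ) ≤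
      (Set.ncard {ω : Fin k → V × EdgePerm G |
        let f : ℝ :=
          (Nat.card {i : Fin k | matchedIn G (rank G (ω i).2) (ω i).1} : ℝ) / (k : ℝ)
        ((matchNum G : ℝ) / 2 - ε * (Fintype.card V : ℝ) ≤
            f * (Fintype.card V : ℝ) / 2 - ε * (Fintype.card V : ℝ) / 2 ∧
          f * (Fintype.card V : ℝ) / 2 - ε * (Fintype.card V : ℝ) / 2 ≤ (matchNum G : ℝ)) ∧
        ((vcNum G : ℝ) ≤ f * (Fintype.card V : ℝ) + ε * (Fintype.card V : ℝ) / 4 ∧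
          f * (Fintype.card V : ℝ) + ε * (Fintype.card V : ℝ) / 4 ≤
            2 * (vcNum G : ℝ) + ε * (Fintype.card V : ℝ))} : ℝ) := by
  classical
  set n : ℝ := (Fintype.card V : ℝ) with hn'
  have hn2 : (2 : ℝ) ≤ n := by rw [hn']; exact_mod_cast hn
  have hn0 : 0 < n := by linarith
  have hk0' : (0 : ℝ) < k := by exact_mod_cast hk0
  let Y : V × EdgePerm G → ℝ := fun a => if matchedIn G (rank G a.2) a.1 then 1 else 0
  set P : ℝ := (Fintype.card (EdgePerm G) : ℝ) with hP
  have hP0 : 0 < P := by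
    have : Nonempty (EdgePerm G) := ⟨G.edgeFinset.equivFin⟩
    rw [hP]
    exact_mod_cast Fintype.card_pos
  have hcard : (Fintype.card (V × EdgePerm G) : ℝ) = n * P := by
    rw [Fintype.card_prod]; push_cast; rfl
  set T : ℝ := ∑ a, Y a with hT
  have hTsum : T = ∑ σ : EdgePerm G, ((matchedSet G (rank G σ)).card : ℝ) := by
    rw [hT, Fintype.sum_prod_type, Finset.sum_comm]
    refine Finset.sum_congr rfl fun σ _ => ?_
    simp [Y, matchedSet]
  have hb := fun σ : EdgePerm G => matchedSet_bounds G (rank G σ) (rank_injOn G σ)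
  have hlow : ∀ c : ℕ, (∀ σ : EdgePerm G, c ≤ (matchedSet G (rank G σ)).card) →
      (c : ℝ) ≤ T / P := by
    intro c hc
    rw [le_div_iff₀ hP0, hTsum]
    calc (c : ℝ) * P = ∑ σ : EdgePerm G, (c : ℝ) := by
          rw [Finset.sum_const, Finset.card_univ, nsmul_eq_mul, mul_comm]
      _ ≤ _ := Finset.sum_le_sum fun σ _ => by exact_mod_cast hc σ
  have hup : ∀ c : ℕ, (∀ σ : EdgePerm G, (matchedSet G (rank G σ)).card ≤ 2 * c) →
      T / P ≤ 2 * (c : ℝ) := by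
    intro c hc
    rw [div_le_iff₀ hP0, hTsum]
    calc _ ≤ ∑ σ : EdgePerm G, (2 * (c : ℝ)) :=
          Finset.sum_le_sum fun σ _ => by exact_mod_cast hc σ
      _ = 2 * (c : ℝ) * P := by
          rw [Finset.sum_const, Finset.card_univ, nsmul_eq_mul, mul_comm]
  have hμ1 := hlow _ fun σ => (hb σ).1
  have hμ2 := hup _ fun σ => (hb σ).2.1
  have hν1 := hlow _ fun σ => (hb σ).2.2.1
  have hν2 := hup _ fun σ => (hb σ).2.2.2
  -- `p` is the probability that a random vertex is matched under a random ranking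
  set p : ℝ := T / (n * P) with hp
  have hpn : T / P = p * n := by
    rw [hp]; field_simp
  rw [hpn] at hμ1 hμ2 hν1 hν2
  have hY0 : ∀ a, 0 ≤ Y a := fun a => by simp only [Y]; split_ifs <;> norm_num
  have hY1 : ∀ a, Y a ≤ 1 := fun a => by simp only [Y]; split_ifs <;> norm_num
  have hT0 : 0 ≤ T := Finset.sum_nonneg fun a _ => hY0 a
  have hT1 : T ≤ n * P := by
    rw [← hcard, hT]
    calc _ ≤ ∑ a : V × EdgePerm G, (1 : ℝ) := Finset.sum_le_sum fun a _ => hY1 a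
      _ = _ := by simp
  have hp0 : 0 ≤ p := by positivity
  have hp1 : p ≤ 1 := div_le_one_of_le₀ hT1 (by positivity)
  have hcent : ∑ a, (Y a - p) = 0 := by
    rw [Finset.sum_sub_distrib, ← hT, Finset.sum_const, Finset.card_univ, nsmul_eq_mul, hcard, hp]
    field_simp
    ring
  have habs : ∀ a, |Y a - p| ≤ 1 := fun a => by
    rw [abs_le]; constructor <;> linarith [hY0 a, hY1 a]
  let B₁ : Finset (Fin k → V × EdgePerm G) :=
    Finset.univ.filter fun ω => k * (ε / 4) ≤ ∑ i, (Y (ω i) - p)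
  let B₂ : Finset (Fin k → V × EdgePerm G) :=
    Finset.univ.filter fun ω => k * (ε / 4) ≤ ∑ i, (p - Y (ω i))
  have hB₁ := card_tail_le (fun a => Y a - p) habs hcent (ε / 4) (by linarith) (by linarith) k B₁
    (fun ω hω => (Finset.mem_filter.1 hω).2)
  have hB₂ := card_tail_le (fun a => p - Y a) (fun a => by rw [abs_sub_comm]; exact habs a)
    (by rw [← neg_zero, ← hcent, ← Finset.sum_neg_distrib]; simp)
    (ε / 4) (by linarith) (by linarith) k B₂ (fun ω hω => (Finset.mem_filter.1 hω).2)
  have hexp : Real.exp (-(k * (ε / 4) ^ 2 / 4)) ≤ 1 / n ^ 4 := by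
    have hlog : 0 ≤ Real.log n := Real.log_nonneg (by linarith)
    rw [div_le_iff₀ (by positivity)] at hk
    have : Real.exp (-(4 * Real.log n)) = 1 / n ^ 4 := by
      rw [Real.exp_neg, one_div]
      congr 1
      rw [show 4 * Real.log n = ((4 : ℕ) : ℝ) * Real.log n by norm_num, Real.exp_nat_mul,
        Real.exp_log hn0]
    rw [← this]
    apply Real.exp_le_exp.2
    linarith
  set N : ℝ := (Fintype.card (V × EdgePerm G) : ℝ) ^ k with hN
  have hNpos : 0 ≤ N := by positivity
  have hNcard : (Fintype.card (Fin k → V × EdgePerm G) : ℝ) = N := by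
    rw [Fintype.card_fun, Fintype.card_fin]; push_cast; rfl
  have hB₁' : (B₁.card : ℝ) ≤ N * (1 / n ^ 4) := hB₁.trans (by gcongr)
  have hB₂' : (B₂.card : ℝ) ≤ N * (1 / n ^ 4) := hB₂.trans (by gcongr)
  have hcompl : (Fintype.card (Fin k → V × EdgePerm G) : ℝ) ≤
      ((B₁ ∪ B₂)ᶜ.card : ℝ) + (B₁.card + B₂.card) := by
    have h1 := Finset.card_compl_add_card (B₁ ∪ B₂)
    have h2 := Finset.card_union_le B₁ B₂
    exact_mod_cast (by omega : Fintype.card (Fin k → V × EdgePerm G) ≤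
      (B₁ ∪ B₂)ᶜ.card + (B₁.card + B₂.card))
  have hgood : (1 - 2 / n ^ 4) * (Fintype.card (Fin k → V × EdgePerm G) : ℝ) ≤
      ((B₁ ∪ B₂)ᶜ.card : ℝ) := by
    rw [hNcard] at hcompl ⊢
    have : (1 - 2 / n ^ 4) * N = N - (N * (1 / n ^ 4) + N * (1 / n ^ 4)) := by ring
    linarith
  refine hgood.trans ?_
  rw [← Set.ncard_coe_finset]
  refine Nat.cast_le.2 (Set.ncard_le_ncard ?_ (Set.toFinite _))
  intro ω hω
  simp only [B₁, B₂, Finset.coe_compl, Set.mem_compl_iff, Finset.mem_coe, Finset.mem_union,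
    Finset.mem_filter, Finset.mem_univ, true_and, not_or, not_le, Finset.sum_sub_distrib,
    Finset.sum_const, Finset.card_univ, Fintype.card_fin, nsmul_eq_mul] at hω
  have hX : (Nat.card {i : Fin k | matchedIn G (rank G (ω i).2) (ω i).1} : ℝ) =
      ∑ i, Y (ω i) := by
    rw [Nat.card_eq_fintype_card, Fintype.card_subtype]
    simp [Y]
  simp only [Set.mem_ofPred_eq]
  rw [hX]
  have hXf : ∑ i, Y (ω i) = k * ((∑ i, Y (ω i)) / k) := (mul_div_cancel₀ _ hk0'.ne').symm
  rw [hXf] at hω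
  generalize (∑ i, Y (ω i)) / (k : ℝ) = f at hω ⊢
  exact deterministic_bounds _ _ f p ε n k hε0 hn0 hk0' hω.1 hω.2 hμ1 hμ2 hν1 hν2

end

end RGMM
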